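/- Every binary form of degree d has Waring rank at most d, and this bound is achieved: the form x^{d−1} y has rank exactly d. In particular, the maximal Waring rank among binary forms of degree d is exactly d. -/

import Mathlib

open MvPolynomial Finset

noncomputable section

def linForm (K : Type) [Field K] (c : Fin 2 → K) : MvPolynomial (Fin 2) K :=
  C (c 0) * X 0 + C (c 1) * X 1

/-- `α` is not a scalar multiple of `β` (for nonzero vectors: distinct points of `ℙ¹`). -/
def NonProp (K : Type) [Field K] (α β : Fin 2 → K) : Prop := ∀ t : K, α ≠ t • β

/-- The Waring rank of a binary form: the least `r` such that `q` is a sum of `r`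
`d`-th powers of linear forms. -/
def waringRank (K : Type) [Field K] (d : ℕ) (q : MvPolynomial (Fin 2) K) : ℕ :=
  sInf {r : ℕ | ∃ L : Fin r → Fin 2 → K, q = ∑ i, linForm K (L i) ^ d}


def mon2 (d k : ℕ) : Fin 2 →₀ ℕ := Finsupp.single 0 (d - k) + Finsupp.single 1 k

lemma coeff_linForm_pow (K : Type) [Field K] (c : Fin 2 → K) (d k : ℕ) (hk : k ≤ d) :
    coeff (mon2 d k) (linForm K c ^ d) = (d.choose k : K) * (c 0 ^ (d - k) * c 1 ^ k) := by
  classical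
  have h : linForm K c ^ d = ∑ j ∈ range (d + 1),
      monomial (mon2 d j) ((d.choose j : K) * (c 0 ^ (d - j) * c 1 ^ j)) := by
    rw [linForm, add_comm, add_pow]
    refine Finset.sum_congr rfl fun j _ => ?_
    have : (monomial (mon2 d j) ((d.choose j : K) * (c 0 ^ (d - j) * c 1 ^ j)) :
        MvPolynomial (Fin 2) K) = C ((d.choose j : K) * (c 0 ^ (d - j) * c 1 ^ j)) *
          (X 0 ^ (d - j) * X 1 ^ j) := by
      rw [X_pow_eq_monomial, X_pow_eq_monomial, monomial_mul, C_mul_monomial, mon2]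
      simp
    rw [this]
    simp only [map_mul, map_pow, map_natCast, mul_pow]
    ring
  rw [h, coeff_sum, Finset.sum_eq_single k]
  · simp
  · intro j _ hj
    rw [coeff_monomial, if_neg]
    intro h
    apply hj
    have := DFunLike.congr_fun h 1
    simpa [mon2] using this
  · intro h
    simp at h
    omega

lemma isHomogeneous_linForm_pow (K : Type) [Field K] (c : Fin 2 → K) (d : ℕ) :
    (linForm K c ^ d).IsHomogeneous d := by
  have : (linForm K c).IsHomogeneous 1 := by
    unfold linForm
    apply IsHomogeneous.add
    · simpa using (isHomogeneous_C (Fin 2) (c 0)).mul (isHomogeneous_X K (0 : Fin 2))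
    · simpa using (isHomogeneous_C (Fin 2) (c 1)).mul (isHomogeneous_X K (1 : Fin 2))
  simpa using this.pow d

lemma homog_ext (K : Type) [Field K] (d : ℕ) (p q : MvPolynomial (Fin 2) K)
    (hp : p.IsHomogeneous d) (hq : q.IsHomogeneous d)
    (h : ∀ k ≤ d, coeff (mon2 d k) p = coeff (mon2 d k) q) : p = q := by
  ext m
  by_cases hm : m.degree = d
  · have hs : m 0 + m 1 = d := by
      rw [← hm, Finsupp.degree_eq_sum, Fin.sum_univ_two]
    have : m = mon2 d (m 1) := by
      ext i
      fin_cases i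
      · simp [mon2]; omega
      · simp [mon2]
    rw [this]
    exact h _ (by omega)
  · rw [hp.coeff_eq_zero hm, hq.coeff_eq_zero hm]

/-- The functional on polynomials given by moments `a`. -/
def mom (K : Type) [Field K] (a : ℕ → K) (d : ℕ) : Polynomial K →ₗ[K] K :=
  ∑ k ∈ range (d + 1), a k • Polynomial.lcoeff K k

lemma mom_apply (K : Type) [Field K] (a : ℕ → K) (d : ℕ) (p : Polynomial K) :
    mom K a d p = ∑ k ∈ range (d + 1), a k * p.coeff k := by
  simp [mom]

lemma mom_X_pow (K : Type) [Field K] (a : ℕ → K) (d k : ℕ) (hk : k ≤ d) :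
    mom K a d (Polynomial.X ^ k) = a k := by
  rw [mom_apply, Finset.sum_eq_single k]
  · simp
  · intro j _ hj
    simp [Polynomial.coeff_X_pow, hj]
  · intro h
    simp at h
    omega

lemma exists_weights (K : Type) [Field K] (a : ℕ → K) (d : ℕ) (t : Fin d → K)
    (ht : Function.Injective t)
    (hg : mom K a d (∏ i, (Polynomial.X - Polynomial.C (t i))) = 0) :
    ∃ c : Fin d → K, ∀ k ≤ d, a k = ∑ i, c i * t i ^ k := by
  classical
  have key : ∀ p : Polynomial K, p.degree < (d : ℕ) →
      mom K a d p = ∑ i, mom K a d (Lagrange.basis univ t i) * p.eval (t i) := by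
    intro p hp
    have := Lagrange.eq_interpolate (s := univ) (v := t) (f := p) ht.injOn (by simpa using hp)
    conv_lhs => rw [this]
    rw [Lagrange.interpolate_apply, map_sum]
    refine Finset.sum_congr rfl fun i _ => ?_
    rw [← Polynomial.smul_eq_C_mul, map_smul, smul_eq_mul, mul_comm]
  refine ⟨fun i => mom K a d (Lagrange.basis univ t i), fun k hk => ?_⟩
  rcases hk.lt_or_eq with hk' | rfl
  · rw [← mom_X_pow K a d k hk, key _ (by rw [Polynomial.degree_X_pow]; exact_mod_cast hk')]
    simp
  · have hm : (∏ i, (Polynomial.X - Polynomial.C (t i))).Monic :=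
      Polynomial.monic_prod_of_monic _ _ fun i _ => Polynomial.monic_X_sub_C _
    have hdg : (∏ i, (Polynomial.X - Polynomial.C (t i))).degree = ((k : ℕ) : WithBot ℕ) := by
      rw [Polynomial.degree_prod]
      simp
    have := key (Polynomial.X ^ k - ∏ i, (Polynomial.X - Polynomial.C (t i))) (by
      have := Polynomial.degree_sub_lt_left (p := Polynomial.X ^ k)
        (q := ∏ i, (Polynomial.X - Polynomial.C (t i)))
        (by rw [hdg, Polynomial.degree_X_pow]) (by simp) (by simp [hm.leadingCoeff])
      simpa using this)
    rw [map_sub, hg, sub_zero, mom_X_pow K a k k le_rfl] at this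
    rw [this]
    refine Finset.sum_congr rfl fun i _ => ?_
    have : (∏ j, (Polynomial.X - Polynomial.C (t j))).eval (t i) = 0 := by
      rw [Polynomial.eval_prod]
      exact Finset.prod_eq_zero (Finset.mem_univ i) (by simp)
    simp [this]

/-- One-parameter family of values of the functional. -/
def momP (K : Type) [Field K] (a : ℕ → K) (d : ℕ) (F : Polynomial (Polynomial K)) :
    Polynomial K := ∑ k ∈ range (d + 1), Polynomial.C (a k) * F.coeff k

lemma eval_momP (K : Type) [Field K] (a : ℕ → K) (d : ℕ) (F : Polynomial (Polynomial K)) (e : K) :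
    (momP K a d F).eval e = mom K a d (F.map (Polynomial.evalRingHom e)) := by
  simp [momP, mom_apply, Polynomial.eval_finsetSum]

lemma exists_base (K : Type) [Field K] [CharZero K] (a : ℕ → K) (n k : ℕ) (hk : k ≤ n)
    (hak : a k ≠ 0) (d : ℕ) (hnd : n ≤ d) :
    momP K a d ((Polynomial.X - Polynomial.C Polynomial.X) ^ n) ≠ 0 := by
  intro h0
  have h1 : (momP K a d ((Polynomial.X - Polynomial.C Polynomial.X) ^ n)).coeff (n - k) = 0 := by
    rw [h0]; simp
  rw [momP, Polynomial.finsetSum_coeff, Finset.sum_eq_single k] at h1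
  · rw [sub_eq_add_neg, ← Polynomial.C_neg, Polynomial.coeff_X_add_C_pow, neg_pow] at h1
    have e : (Polynomial.C (a k) * ((-1) ^ (n - k) * Polynomial.X ^ (n - k) * (n.choose k : Polynomial K)))
      = Polynomial.C (a k * (-1) ^ (n - k) * (n.choose k : K)) * Polynomial.X ^ (n - k) := by
      simp only [map_mul, map_pow, map_neg, map_one, map_natCast]; ring
    rw [e, Polynomial.coeff_C_mul_X_pow, if_pos rfl] at h1
    have : (n.choose k : K) ≠ 0 := by exact_mod_cast (Nat.choose_pos hk).ne'
    simp [hak, this] at h1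
  · intro j _ hj
    rw [sub_eq_add_neg, ← Polynomial.C_neg, Polynomial.coeff_X_add_C_pow, neg_pow]
    have e : (Polynomial.C (a j) * ((-1) ^ (n - j) * Polynomial.X ^ (n - j) * (n.choose j : Polynomial K)))
      = Polynomial.C (a j * (-1) ^ (n - j) * (n.choose j : K)) * Polynomial.X ^ (n - j) := by
      simp only [map_mul, map_pow, map_neg, map_one, map_natCast]; ring
    rw [e, Polynomial.coeff_C_mul_X_pow]
    split_ifs with h
    · rw [Nat.choose_eq_zero_of_lt (by omega)]; simp
    · rfl
  · intro h
    simp at h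
    omega

lemma exists_nonroot (K : Type) [Field K] [CharZero K] (p : Polynomial K) (hp : p ≠ 0) :
    ∃ e, p.eval e ≠ 0 := by
  by_contra! h
  exact hp (Polynomial.funext (by simpa using h))

lemma exists_points (K : Type) [Field K] [CharZero K] (a : ℕ → K) (n k : ℕ) (hk : k ≤ n)
    (hak : a k ≠ 0) : ∃ t : Fin (n + 1) → K, Function.Injective t ∧
      mom K a (n + 1) (∏ i, (Polynomial.X - Polynomial.C (t i))) = 0 := by
  have h1 := exists_base K a n k hk hak (n + 1) (by omega)
  have h2 := exists_base K a (n + 1) k (by omega) hak (n + 1) le_rfl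
  obtain ⟨b, hb⟩ := exists_nonroot K _ (mul_ne_zero h1 h2)
  rw [Polynomial.eval_mul, eval_momP, eval_momP] at hb
  simp only [Polynomial.map_pow, Polynomial.map_sub, Polynomial.map_X, Polynomial.map_C,
    Polynomial.coe_evalRingHom, Polynomial.eval_X] at hb
  obtain ⟨hb1, hb2⟩ := mul_ne_zero_iff.mp hb
  let τ : Fin n → Polynomial K := fun i => Polynomial.C b + Polynomial.C ((i : ℕ) : K) * Polynomial.X
  let H : Polynomial (Polynomial K) := ∏ j, (Polynomial.X - Polynomial.C (τ j))
  have hH : ∀ e, H.map (Polynomial.evalRingHom e) =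
      ∏ j : Fin n, (Polynomial.X - Polynomial.C (b + ((j : ℕ) : K) * e)) := by
    intro e
    simp [H, τ, Polynomial.map_prod]
  have hF : ∀ (e : K) (i : Fin n), ((Polynomial.X - Polynomial.C (τ i)) * H).map (Polynomial.evalRingHom e) =
      (Polynomial.X - Polynomial.C (b + ((i : ℕ) : K) * e)) *
      ∏ j : Fin n, (Polynomial.X - Polynomial.C (b + ((j : ℕ) : K) * e)) := by
    intro e i
    rw [Polynomial.map_mul, hH]
    simp [τ]
  have n1 : momP K a (n + 1) H ≠ 0 := by
    intro h
    have := eval_momP K a (n + 1) H 0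
    rw [h, hH] at this
    simp at this
    exact hb1 (by simpa using this.symm)
  have n2 : ∀ i, momP K a (n + 1) ((Polynomial.X - Polynomial.C (τ i)) * H) ≠ 0 := by
    intro i h
    have := eval_momP K a (n + 1) ((Polynomial.X - Polynomial.C (τ i)) * H) 0
    rw [h, hF] at this
    simp only [mul_zero, add_zero, Finset.prod_const, Finset.card_univ, Fintype.card_fin,
      Polynomial.eval_zero] at this
    rw [← pow_succ'] at this
    exact hb2 this.symm
  obtain ⟨e, he⟩ := exists_nonroot K (Polynomial.X * (momP K a (n + 1) H *
    ∏ i, momP K a (n + 1) ((Polynomial.X - Polynomial.C (τ i)) * H)))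
    (mul_ne_zero Polynomial.X_ne_zero (mul_ne_zero n1 (Finset.prod_ne_zero_iff.mpr fun i _ => n2 i)))
  rw [Polynomial.eval_mul, Polynomial.eval_mul, Polynomial.eval_prod] at he
  obtain ⟨he0, he⟩ := mul_ne_zero_iff.mp he
  obtain ⟨he1, he2⟩ := mul_ne_zero_iff.mp he
  rw [Finset.prod_ne_zero_iff] at he2
  simp only [Polynomial.eval_X] at he0
  rw [eval_momP, hH] at he1
  simp only [eval_momP, hF] at he2
  set h := ∏ j : Fin n, (Polynomial.X - Polynomial.C (b + ((j : ℕ) : K) * e)) with hh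
  have lin : ∀ s, mom K a (n + 1) ((Polynomial.X - Polynomial.C s) * h) =
      mom K a (n + 1) (Polynomial.X * h) - s * mom K a (n + 1) h := by
    intro s
    rw [sub_mul, map_sub, ← Polynomial.smul_eq_C_mul, map_smul, smul_eq_mul]
  have hs : mom K a (n + 1) ((Polynomial.X - Polynomial.C
      (mom K a (n + 1) (Polynomial.X * h) / mom K a (n + 1) h)) * h) = 0 := by
    rw [lin]; field_simp; simp
  refine ⟨Fin.cons (mom K a (n + 1) (Polynomial.X * h) / mom K a (n + 1) h)
    (fun j : Fin n => b + ((j : ℕ) : K) * e), ?_, ?_⟩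
  · rw [Fin.cons_injective_iff]
    constructor
    · rintro ⟨i, hi⟩
      apply he2 i (Finset.mem_univ _)
      simp only at hi
      rw [hi]
      exact hs
    · intro i j hij
      simpa [he0, Fin.ext_iff] using hij
  · rw [Fin.prod_univ_succ]
    simp only [Fin.cons_zero, Fin.cons_succ]
    exact hs

lemma upper (K : Type) [Field K] [IsAlgClosed K] [CharZero K] (d : ℕ) (hd : 2 ≤ d)
    (q : MvPolynomial (Fin 2) K) (hq : q.IsHomogeneous d) :
    ∃ L : Fin d → Fin 2 → K, q = ∑ i, linForm K (L i) ^ d := by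
  obtain ⟨n, rfl⟩ : ∃ n, d = n + 1 := ⟨d - 1, by omega⟩
  have hroot : ∀ c : K, ∃ z : K, z ^ (n + 1) = c := fun c =>
    IsAlgClosed.exists_pow_nat_eq c (by omega)
  have hch : ∀ k ≤ n + 1, ((n + 1).choose k : K) ≠ 0 := fun k hk => by
    exact_mod_cast (Nat.choose_pos hk).ne'
  let a : ℕ → K := fun k => coeff (mon2 (n + 1) k) q / ((n + 1).choose k : K)
  have ha : ∀ k ≤ n + 1, coeff (mon2 (n + 1) k) q = ((n + 1).choose k : K) * a k := by
    intro k hk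
    have := hch k hk
    simp only [a]
    field_simp
  suffices h : ∃ L : Fin (n + 1) → Fin 2 → K, ∀ k ≤ n + 1,
      a k = ∑ i, L i 0 ^ (n + 1 - k) * L i 1 ^ k by
    obtain ⟨L, hL⟩ := h
    refine ⟨L, homog_ext K (n + 1) _ _ hq
      (IsHomogeneous.sum _ _ _ fun i _ => isHomogeneous_linForm_pow K _ _) fun k hk => ?_⟩
    rw [ha k hk, hL k hk, coeff_sum, Finset.mul_sum]
    exact Finset.sum_congr rfl fun i _ => (coeff_linForm_pow K _ _ _ hk).symm
  by_cases hz : ∃ k ≤ n, a k ≠ 0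
  · obtain ⟨k, hk, hak⟩ := hz
    obtain ⟨t, ht, hg⟩ := exists_points K a n k hk hak
    obtain ⟨c, hc⟩ := exists_weights K a (n + 1) t ht hg
    choose z hzz using fun i => hroot (c i)
    refine ⟨fun i => ![z i, z i * t i], fun k hk => ?_⟩
    rw [hc k hk]
    refine Finset.sum_congr rfl fun i _ => ?_
    simp only [Matrix.cons_val_zero, Matrix.cons_val_one]
    rw [mul_pow, ← mul_assoc, ← pow_add, Nat.sub_add_cancel hk, hzz]
  · push Not at hz
    obtain ⟨z, hzz⟩ := hroot (a (n + 1))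
    refine ⟨Fin.cons ![0, z] fun _ => ![0, 0], fun k hk => ?_⟩
    rw [Fin.sum_univ_succ]
    rcases hk.lt_or_eq with hk' | rfl
    · have : n + 1 - k ≠ 0 := by omega
      simp [hz k (by omega), this]
    · simp [hzz]

lemma lower (K : Type) [Field K] [CharZero K] (d : ℕ) (hd : 2 ≤ d) (r : ℕ)
    (L : Fin r → Fin 2 → K)
    (h : (X 0 : MvPolynomial (Fin 2) K) ^ (d - 1) * X 1 = ∑ i, linForm K (L i) ^ d) : d ≤ r := by
  classical
  by_contra! hr
  have hc : ∀ k ≤ d, ∑ i, L i 0 ^ (d - k) * L i 1 ^ k = if k = 1 then (d : K)⁻¹ else 0 := by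
    intro k hk
    have h1 := congrArg (coeff (mon2 d k)) h
    have hch : (d.choose k : K) ≠ 0 := by exact_mod_cast (Nat.choose_pos hk).ne'
    have e : (X 0 : MvPolynomial (Fin 2) K) ^ (d - 1) * X 1 = monomial (mon2 d 1) 1 := by
      rw [X_pow_eq_monomial, X, monomial_mul, mon2]; simp
    rw [e, coeff_sum, coeff_monomial,
      Finset.sum_congr rfl (fun i _ => coeff_linForm_pow K (L i) d k hk), ← Finset.mul_sum] at h1
    split_ifs with hk1
    · subst hk1
      simp only [if_true, Nat.choose_one_right] at h1
      exact eq_inv_of_mul_eq_one_right h1.symm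
    · rw [if_neg] at h1
      · simpa [hch] using h1.symm
      · intro h
        have := DFunLike.congr_fun h 1
        simp [mon2] at this
        omega
  let f : Fin r → Polynomial K := fun i =>
    if L i 0 = 0 ∨ L i 1 = 0 then 1 else Polynomial.C (L i 0) * Polynomial.X - Polynomial.C (L i 1)
  let g : Polynomial K := Polynomial.X * ∏ i, f i
  have hf1 : ∀ i, (f i).natDegree ≤ 1 := by
    intro i
    simp only [f]
    split_ifs
    · simp
    · compute_degree
  have hfd : ∀ i, L i 0 = 0 → (f i).natDegree = 0 := by
    intro i hi
    simp [f, hi]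
  have hprod : (∏ i, f i).natDegree ≤ ∑ i, (f i).natDegree := Polynomial.natDegree_prod_le _ _
  have hsum : ∑ i, (f i).natDegree ≤ r := by
    simpa using Finset.sum_le_sum (fun i (_ : i ∈ univ) => hf1 i)
  have hgle : g.natDegree ≤ 1 + (∏ i, f i).natDegree := by
    simpa using Polynomial.natDegree_mul_le (p := (Polynomial.X : Polynomial K)) (q := ∏ i, f i)
  have hgd : g.natDegree < d + 1 := by omega
  have hg1 : g.coeff 1 ≠ 0 := by
    have : g.coeff 1 = ∏ i, (f i).coeff 0 := by
      simp only [g]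
      rw [show (1 : ℕ) = 0 + 1 from rfl, Polynomial.coeff_X_mul, Polynomial.coeff_zero_prod]
    rw [this, Finset.prod_ne_zero_iff]
    intro i _
    simp only [f]
    split_ifs with hi
    · simp
    · push Not at hi
      simpa using hi.2
  have hpt : ∀ i, ∑ k ∈ range (d + 1), g.coeff k * (L i 0 ^ (d - k) * L i 1 ^ k) = 0 := by
    intro i
    by_cases hi : L i 0 = 0
    · apply Finset.sum_eq_zero
      intro k hk
      rcases (Nat.lt_succ_iff.mp (Finset.mem_range.mp hk)).lt_or_eq with hk' | rfl
      · rw [hi, zero_pow (by omega)]; simp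
      · rw [Polynomial.coeff_eq_zero_of_natDegree_lt]
        · simp
        · have : ∑ i, (f i).natDegree < ∑ i : Fin r, 1 :=
            Finset.sum_lt_sum (fun j _ => hf1 j) ⟨i, Finset.mem_univ _, by rw [hfd i hi]; simp⟩
          simp at this
          omega
    · have hev : g.eval (L i 1 / L i 0) = 0 := by
        simp only [g, Polynomial.eval_mul, Polynomial.eval_X, Polynomial.eval_prod]
        by_cases hi1 : L i 1 = 0
        · simp [hi1]
        · rw [Finset.prod_eq_zero (Finset.mem_univ i)]
          · simp
          · simp only [f, hi, hi1, or_self, if_false]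
            simp
            field_simp
            simp
      rw [Polynomial.eval_eq_sum_range' hgd] at hev
      rw [← mul_zero (L i 0 ^ d), ← hev, Finset.mul_sum]
      refine Finset.sum_congr rfl fun k hk => ?_
      have hk := Nat.lt_succ_iff.mp (Finset.mem_range.mp hk)
      obtain ⟨m, rfl⟩ := Nat.exists_eq_add_of_le hk
      rw [Nat.add_sub_cancel_left, pow_add, div_pow]
      field_simp
  have htot : ∑ i, ∑ k ∈ range (d + 1), g.coeff k * (L i 0 ^ (d - k) * L i 1 ^ k) = 0 :=
    Finset.sum_eq_zero fun i _ => hpt i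
  rw [Finset.sum_comm] at htot
  simp_rw [← Finset.mul_sum] at htot
  rw [Finset.sum_eq_single 1] at htot
  · rw [hc 1 (by omega), if_pos rfl] at htot
    have : (d : K) ≠ 0 := by exact_mod_cast (by omega : d ≠ 0)
    simp [hg1, this] at htot
  · intro k hk hk1
    rw [hc k (Nat.lt_succ_iff.mp (Finset.mem_range.mp hk)), if_neg hk1, mul_zero]
  · intro h
    simp at h
    omega

/-- Every binary form of degree `d` is a sum of `d` `d`-th powers of linear forms, and the
bound is attained: `x^{d-1}y` has Waring rank exactly `d`. -/
theorem stmt19 (K : Type) [Field K] [IsAlgClosed K] [CharZero K] (d : ℕ) (hd : 2 ≤ d) :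
    (∀ q : MvPolynomial (Fin 2) K, q.IsHomogeneous d →
      ∃ L : Fin d → Fin 2 → K, q = ∑ i, linForm K (L i) ^ d) ∧
    waringRank K d ((X 0 : MvPolynomial (Fin 2) K) ^ (d - 1) * X 1) = d := by
  refine ⟨fun q hq => upper K d hd q hq, ?_⟩
  have hmem := upper K d hd ((X 0 : MvPolynomial (Fin 2) K) ^ (d - 1) * X 1) (by
    have := ((isHomogeneous_X K (0 : Fin 2)).pow (d - 1)).mul (isHomogeneous_X K (1 : Fin 2))
    have e : 1 * (d - 1) + 1 = d := by omega
    rwa [e] at this)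
  apply le_antisymm
  · exact Nat.sInf_le hmem
  · refine le_csInf ⟨d, hmem⟩ ?_
    rintro r ⟨L, hL⟩
    exact lower K d hd r L hL
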